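/- Let G : (Set Q → ℝ) → (Set Q → ℝ) be continuous with respect to the product topology on (Set Q → ℝ), map distributions on 𝒫(Q) to distributions on 𝒫(Q), and be monotone with respect to ⪯ on distributions. Let β : ℕ → (Set Q → ℝ) be a sequence of distributions with β(i+1) = G(β i) and β(i) ⪯ β(i+1) for all i, converging pointwise to β_∞. Then β_∞ is a distribution, G(β_∞) = β_∞, β 0 ⪯ β_∞, and β_∞ is the ⪯-least such fixed point above β 0: every distribution θ with G(θ) = θ and β 0 ⪯ θ satisfies β_∞ ⪯ θ. -/

import Mathlib

open Filter

/-- A family `U : Set (Set Q)` is upward-closed if `P ∈ U` and `P ⊆ P'` imply `P' ∈ U`. -/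
def UpwardClosed {Q : Type*} (U : Set (Set Q)) : Prop :=
  ∀ ⦃P P' : Set Q⦄, P ∈ U → P ⊆ P' → P' ∈ U

/-- A distribution on `𝒫(Q)`: a nonnegative function on `Set Q` summing to `1`. -/
def IsDistribution {Q : Type*} [Fintype Q] (α : Set Q → ℝ) : Prop :=
  (∀ P, 0 ≤ α P) ∧ ∑ P : Set Q, α P = 1

/-- `α ⪯ β` iff for every upward-closed `U ⊆ 𝒫(Q)`, `∑_{P ∈ U} α P ≤ ∑_{P ∈ U} β P`. -/
def DistLE {Q : Type*} [Fintype Q] (α β : Set Q → ℝ) : Prop :=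
  ∀ U : Set (Set Q), UpwardClosed U → ∑ᶠ P ∈ U, α P ≤ ∑ᶠ P ∈ U, β P

/-!
Kleene iteration, with a topological limit in place of a supremum. The limit is fixed because `G`
is continuous there. Monotonicity propagates `β 0 ⪯ β 1` and `β 0 ⪯ θ = G θ` along the iteration
to `β 0 ⪯ β n` and `β n ⪯ θ`, and both bounds survive in the limit because the relation is closed:
on a finite `Q` every upward-closed family gives a finite sum, hence a continuous functional.
-/

section Iteration

variable {X : Type*} {r : X → X → Prop} {D : Set X} {G : X → X} {x : ℕ → X} {y θ : X}

theorem isFixedPt_of_tendsto_of_succ_eq [TopologicalSpace X] [T2Space X]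
    (hG : ContinuousWithinAt G D y) (hx : ∀ n, x n ∈ D) (hstep : ∀ n, x (n + 1) = G (x n))
    (hlim : Tendsto x atTop (nhds y)) : Function.IsFixedPt G y := by
  have hlimD : Tendsto x atTop (nhdsWithin y D) :=
    tendsto_nhdsWithin_iff.2 ⟨hlim, .of_forall hx⟩
  have hsucc : Tendsto (fun n => G (x n)) atTop (nhds y) := by
    simpa only [← hstep] using (tendsto_add_atTop_iff_nat 1).2 hlim
  exact tendsto_nhds_unique (hG.tendsto.comp hlimD) hsucc

theorem rel_zero_of_succ_eq [IsPreorder X r]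
    (hmono : ∀ ⦃a⦄, a ∈ D → ∀ ⦃b⦄, b ∈ D → r a b → r (G a) (G b))
    (hx : ∀ n, x n ∈ D) (hstep : ∀ n, x (n + 1) = G (x n)) (h01 : r (x 0) (x 1)) (n : ℕ) :
    r (x 0) (x n) := by
  induction n with
  | zero => exact refl_of r _
  | succ n ih =>
    have h1n : r (x 1) (x (n + 1)) := by
      simpa only [hstep] using hmono (hx 0) (hx n) ih
    exact trans_of r h01 h1n

theorem rel_isFixedPt_of_succ_eq
    (hmono : ∀ ⦃a⦄, a ∈ D → ∀ ⦃b⦄, b ∈ D → r a b → r (G a) (G b))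
    (hx : ∀ n, x n ∈ D) (hstep : ∀ n, x (n + 1) = G (x n))
    (hθ : θ ∈ D) (hfix : Function.IsFixedPt G θ) (h0 : r (x 0) θ) (n : ℕ) : r (x n) θ := by
  induction n with
  | zero => exact h0
  | succ n ih => simpa only [hstep, hfix.eq] using hmono (hx n) hθ ih

theorem least_fixed_point_of_increasing_iteration_general [TopologicalSpace X] [T2Space X]
    [IsPreorder X r] (hIic : ∀ b, IsClosed {a | r a b}) (hIci : ∀ a, IsClosed {b | r a b})
    (hD : IsClosed D) (hG : ContinuousWithinAt G D y)
    (hmono : ∀ ⦃a⦄, a ∈ D → ∀ ⦃b⦄, b ∈ D → r a b → r (G a) (G b))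
    (hx : ∀ n, x n ∈ D) (hstep : ∀ n, x (n + 1) = G (x n)) (h01 : r (x 0) (x 1))
    (hlim : Tendsto x atTop (nhds y)) :
    y ∈ D ∧ Function.IsFixedPt G y ∧ r (x 0) y ∧
      ∀ θ ∈ D, Function.IsFixedPt G θ → r (x 0) θ → r y θ := by
  refine ⟨hD.mem_of_tendsto hlim (.of_forall hx),
    isFixedPt_of_tendsto_of_succ_eq hG hx hstep hlim, ?_, fun θ hθ hfix h0 => ?_⟩
  · exact (hIci (x 0)).mem_of_tendsto hlim
      (.of_forall (rel_zero_of_succ_eq hmono hx hstep h01))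
  · exact (hIic θ).mem_of_tendsto hlim
      (.of_forall (rel_isFixedPt_of_succ_eq hmono hx hstep hθ hfix h0))

end Iteration

theorem continuous_finsum_mem_apply {ι M : Type*} [AddCommMonoid M] [TopologicalSpace M]
    [ContinuousAdd M] {s : Set ι} (hs : s.Finite) :
    Continuous fun f : ι → M => ∑ᶠ i ∈ s, f i := by
  simp only [finsum_mem_eq_finite_toFinset_sum _ hs]
  fun_prop

section DistLE

variable {Q : Type*} [Fintype Q]

theorem isClosed_setOf_isDistribution : IsClosed {α : Set Q → ℝ | IsDistribution α} :=
  isClosed_stdSimplex ℝ (Set Q)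

instance DistLE.isPreorder : IsPreorder (Set Q → ℝ) DistLE where
  refl _ _ _ := le_rfl
  trans _ _ _ hαβ hβγ U hU := (hαβ U hU).trans (hβγ U hU)

theorem isClosed_setOf_distLE {X : Type*} [TopologicalSpace X] {f g : X → Set Q → ℝ}
    (hf : Continuous f) (hg : Continuous g) : IsClosed {x | DistLE (f x) (g x)} := by
  have hsum (U : Set (Set Q)) : Continuous fun α : Set Q → ℝ => ∑ᶠ P ∈ U, α P :=
    continuous_finsum_mem_apply U.toFinite
  simp only [DistLE, Set.ofPred_forall]
  exact isClosed_iInter fun U => isClosed_iInter fun _ =>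
    isClosed_le ((hsum U).comp hf) ((hsum U).comp hg)

end DistLE

/-- Let `G` be continuous (product topology on `Set Q → ℝ`), map distributions to distributions,
and be `⪯`-monotone on distributions. Let `β` be a sequence of distributions with
`β (i+1) = G (β i)` and `β i ⪯ β (i+1)`, converging pointwise to `β_∞`. Then `β_∞` is a
distribution, a fixed point of `G`, `β 0 ⪯ β_∞`, and `β_∞` is the `⪯`-least fixed point of
`G` above `β 0`. -/
theorem least_fixed_point_of_increasing_iteration {Q : Type*} [Fintype Q]
    (G : (Set Q → ℝ) → (Set Q → ℝ)) (hGcont : Continuous G)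
    (hGdist : ∀ α, IsDistribution α → IsDistribution (G α))
    (hGmono : ∀ α β, IsDistribution α → IsDistribution β → DistLE α β → DistLE (G α) (G β))
    (β : ℕ → Set Q → ℝ) (hβdist : ∀ i, IsDistribution (β i))
    (hstep : ∀ i, β (i + 1) = G (β i)) (hinc : ∀ i, DistLE (β i) (β (i + 1)))
    (βinf : Set Q → ℝ)
    (hconv : ∀ P : Set Q, Tendsto (fun i => β i P) atTop (nhds (βinf P))) :
    IsDistribution βinf ∧ G βinf = βinf ∧ DistLE (β 0) βinf ∧
    ∀ θ : Set Q → ℝ, IsDistribution θ → G θ = θ → DistLE (β 0) θ → DistLE βinf θ :=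
  least_fixed_point_of_increasing_iteration_general
    (fun _ => isClosed_setOf_distLE continuous_id continuous_const)
    (fun _ => isClosed_setOf_distLE continuous_const continuous_id)
    isClosed_setOf_isDistribution hGcont.continuousWithinAt
    (fun α hα β hβ => hGmono α β hα hβ) hβdist hstep (hinc 0) (tendsto_pi_nhds.2 hconv)
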